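/- Under the stated assumptions, for every t ≥ Ψ(B̃₀) + 3D₀(Ψ(B̄₀) + 3(1+D₀)²/(α(1−β))) the BFGS iterates satisfy (f(x_t) − f(x_*))/(f(x₀) − f(x_*)) ≤ (1 − 2α(1−β)/3)^t. -/

import Mathlib

/-!
Write `P` for the Hessian at the minimizer, `P = S S`, and measure steps in the `P`-norm and
gradients in the `P⁻¹`-norm. Strong self-concordance gives `M ‖x_t - x_*‖_P ≤ D_t`
(`omegaFn_dist_le`), so that between `x_t` and `x_{t+1}` the Hessian is within a factor `1 + D_t`
of `P` (`hess_near`). Hence `‖y_t‖² ≤ (1 + D_t) (s_t ⬝ y_t)` (`secant_le`) and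
`‖∇f(x_t)‖² ≥ 2 C_t / (1 + D_t)` (`gradient_domination`).

Put `a_t = cos² θ_t · ‖s_t‖² / (s_t ⬝ y_t)`, with `θ_t` the angle between the step and the negative
gradient. The Armijo-Wolfe conditions give
`C_{t+1} ≤ (1 - 2α(1-β) a_t / (1 + D_t)) C_t`, while the BFGS update of the nonnegative potential
`Ψ` (`Psi_bfgsUpdate_le`) satisfies, in the metric `c P` for every `c > 0`,
`Ψ_{t+1} ≤ Ψ_t + (1 + D_t)/c - 1 + log (c a_t)`; both are in `bfgs_step`. Telescoping bounds
`∑ log (c a_t)` from below, and an AM-GM type lemma (`geometric_rate`) converts such a bound into a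
linear rate.

The argument is run twice. With `c = 1 + D₀` the terms `(1 + D_t)/c - 1` are nonpositive, and for
`t ≥ Ψ(B̄₀)` there is a crude linear rate. Since `ω(x)/x²` is nonincreasing
(`sq_mul_omegaFn_le`), `D_t ≤ D₀ √(C_t / C₀)`, so `∑ D_t ≤ D₀ (Ψ(B̄₀) + 1 + 3(1+D₀)²/(α(1-β)))`.
With `c = 1` the total loss is then at most `Ψ(B̃₀) + 2 ∑ D_t ≤ t`, which yields the improved rate.
-/

open Matrix Real Finset

noncomputable section

/-- `ω(x) = x − log(1+x)`. -/
def omegaFn (x : ℝ) : ℝ := x - Real.log (1 + x)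

/-- `Ψ(A) = Tr(A) − d − log det A`. -/
def Psi (d : ℕ) (A : Matrix (Fin d) (Fin d) ℝ) : ℝ :=
  A.trace - (d : ℝ) - Real.log A.det

/-- Loewner order: `A ⪯ B` iff `B − A` is positive semidefinite. -/
def loewnerLE {d : ℕ} (A B : Matrix (Fin d) (Fin d) ℝ) : Prop := (B - A).PosSemidef

/-- The BFGS Hessian-approximation update
`B⁺ = B − (B s sᵀ B)/(sᵀ B s) + (y yᵀ)/(sᵀ y)`. -/
def bfgsUpdate {d : ℕ} (B : Matrix (Fin d) (Fin d) ℝ) (s y : Fin d → ℝ) :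
    Matrix (Fin d) (Fin d) ℝ :=
  B - (s ⬝ᵥ (B *ᵥ s))⁻¹ • vecMulVec (B *ᵥ s) (Bᵀ *ᵥ s) + (s ⬝ᵥ y)⁻¹ • vecMulVec y y

/-- `M`-strong self-concordance of a Hessian field:
`∇²f(x) − ∇²f(y) ⪯ M‖x−y‖_z ∇²f(y)` for all `x, y, z`. -/
def StronglySelfConcordant {d : ℕ} (hess : (Fin d → ℝ) → Matrix (Fin d) (Fin d) ℝ)
    (M : ℝ) : Prop :=
  ∀ x y z : Fin d → ℝ,
    loewnerLE (hess x - hess y)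
      ((M * Real.sqrt ((x - y) ⬝ᵥ (hess z *ᵥ (x - y)))) • hess y)


/-! ### Properties of `ω` and an averaged contraction rate -/

lemma hasDerivAt_omegaFn {x : ℝ} (hx : 0 < 1 + x) : HasDerivAt omegaFn (x / (1 + x)) x := by
  have h1 : HasDerivAt (fun x : ℝ => 1 + x) 1 x := (hasDerivAt_id x).const_add 1
  have h := (hasDerivAt_id' x).fun_sub (h1.log hx.ne')
  refine h.congr_deriv (Eq.symm ?_)
  have := hx.ne'
  rw [eq_sub_iff_add_eq, ← add_div, add_comm x 1, div_self this]

lemma omegaFn_strictMonoOn : StrictMonoOn omegaFn (Set.Ici 0) := by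
  apply strictMonoOn_of_deriv_pos (convex_Ici 0)
  · intro x hx
    have : (0 : ℝ) ≤ x := hx
    exact (hasDerivAt_omegaFn (by linarith)).continuousAt.continuousWithinAt
  · intro x hx
    rw [interior_Ici] at hx
    have : (0 : ℝ) < x := hx
    rw [(hasDerivAt_omegaFn (by linarith)).deriv]
    positivity

/-- `ω(x) / x²` is nonincreasing, in multiplicative form. -/
lemma sq_mul_omegaFn_le {l x : ℝ} (hl0 : 0 ≤ l) (hl1 : l ≤ 1) (hx : 0 ≤ x) :
    l ^ 2 * omegaFn x ≤ omegaFn (l * x) := by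
  have hder : ∀ y : ℝ, 0 ≤ y → HasDerivAt (fun y => omegaFn (l * y) - l ^ 2 * omegaFn y)
      (l * y / (1 + l * y) * l - l ^ 2 * (y / (1 + y))) y := by
    intro y hy
    have h0 : 0 ≤ l * y := by positivity
    have h1 : HasDerivAt (fun y : ℝ => l * y) l y := by
      simpa using (hasDerivAt_id y).const_mul l
    exact ((hasDerivAt_omegaFn (x := l * y) (by linarith)).comp y h1).sub
      ((hasDerivAt_omegaFn (by linarith)).const_mul (l ^ 2))
  have hmono : MonotoneOn (fun y => omegaFn (l * y) - l ^ 2 * omegaFn y) (Set.Ici 0) := by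
    apply monotoneOn_of_deriv_nonneg (convex_Ici 0)
    · intro y hy
      exact (hder y hy).continuousAt.continuousWithinAt
    · intro y hy
      rw [interior_Ici] at hy
      exact (hder y (le_of_lt hy)).differentiableAt.differentiableWithinAt
    · intro y hy
      rw [interior_Ici] at hy
      have hy' : (0 : ℝ) < y := hy
      rw [(hder y hy'.le).deriv]
      have : l * y / (1 + l * y) * l - l ^ 2 * (y / (1 + y))
          = l ^ 2 * y * (y * (1 - l)) / ((1 + l * y) * (1 + y)) := by
        have : (1 + l * y) ≠ 0 := by positivity
        field_simp
        ring
      rw [this]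
      have : 0 ≤ 1 - l := by linarith
      positivity
  have h := hmono (Set.mem_Ici.2 le_rfl) (Set.mem_Ici.2 hx) hx
  simp only [omegaFn, mul_zero, add_zero, Real.log_one, sub_zero] at h ⊢
  linarith

/-- If `c i` satisfies `c (i+1) ≤ (1 - κ b i) c i` and the geometric mean of the `b i` is at
least `1/e`, then `c` has contracted at the average rate `1 - κ/3`. This is the AM-GM step of the
argument, carried out by linearizing `log` at `b = 1/3`. -/
lemma geometric_rate {c b : ℕ → ℝ} {κ : ℝ} {n : ℕ} (hκ0 : 0 < κ) (hκ1 : κ < 1)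
    (hc : ∀ i ≤ n, 0 < c i) (hb : ∀ i < n, 0 < b i)
    (hstep : ∀ i < n, c (i + 1) ≤ (1 - κ * b i) * c i)
    (hsum : -(n : ℝ) ≤ ∑ i ∈ Finset.range n, Real.log (b i)) :
    c n ≤ (1 - κ / 3) ^ n * c 0 := by
  have hr : 0 < 1 - κ / 3 := by linarith
  set μ := (κ / 3) / (1 - κ / 3) with hμ
  have hμ0 : 0 ≤ μ := by positivity
  have hlog3 : 1 ≤ Real.log 3 := by
    rw [Real.le_log_iff_exp_le (by norm_num)]
    linarith [Real.exp_one_lt_d9]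
  have one : ∀ i < n, Real.log (c (i + 1)) - Real.log (c i)
      ≤ Real.log (1 - κ / 3) - μ * (Real.log (b i) + 1) := by
    intro i hi
    have h0 := hc i hi.le
    have h1 := hc (i + 1) hi
    have hbi := hb i hi
    have hq : c (i + 1) / c i ≤ 1 - κ * b i := by
      rw [div_le_iff₀ h0]; exact hstep i hi
    have h2 := Real.log_le_sub_one_of_pos (x := c (i + 1) / c i / (1 - κ / 3)) (by positivity)
    rw [Real.log_div (by positivity) hr.ne', Real.log_div h1.ne' h0.ne'] at h2
    have h3 : c (i + 1) / c i / (1 - κ / 3) - 1 ≤ μ * (1 - 3 * b i) := by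
      have : μ * (1 - 3 * b i) = (1 - κ * b i) / (1 - κ / 3) - 1 := by
        have := hr.ne'
        rw [hμ, div_mul_eq_mul_div, eq_sub_iff_add_eq, div_add_one this]
        congr 1
        ring
      rw [this]
      gcongr
    have h4 := Real.log_le_sub_one_of_pos (x := 3 * b i) (by positivity)
    rw [Real.log_mul (by norm_num) hbi.ne'] at h4
    nlinarith
  have hs := Finset.sum_le_sum (fun i hi => one i (Finset.mem_range.1 hi))
  rw [Finset.sum_range_sub (fun i => Real.log (c i)), Finset.sum_sub_distrib, ← Finset.mul_sum,
    Finset.sum_add_distrib] at hs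
  simp only [Finset.sum_const, Finset.card_range, nsmul_eq_mul, mul_one] at hs
  have h5 : 0 ≤ μ * (∑ i ∈ Finset.range n, Real.log (b i) + n) :=
    mul_nonneg hμ0 (by linarith)
  have h6 : Real.log (c n) ≤ Real.log ((1 - κ / 3) ^ n * c 0) := by
    rw [Real.log_mul (by positivity) (hc 0 (Nat.zero_le _)).ne', Real.log_pow]
    linarith
  exact (Real.log_le_log_iff (hc n le_rfl)
    (mul_pos (by positivity) (hc 0 (Nat.zero_le _)))).1 h6

/-! ### The potential `Ψ` and the BFGS update -/

/-- The logarithmic-determinant potential is nonnegative: `λ - 1 - log λ ≥ 0` on eigenvalues. -/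
lemma Psi_nonneg {d : ℕ} {A : Matrix (Fin d) (Fin d) ℝ} (hA : A.PosDef) : 0 ≤ Psi d A := by
  have hd : A.det = ∏ i, hA.1.eigenvalues i := by simpa using hA.1.det_eq_prod_eigenvalues
  have ht : A.trace = ∑ i, hA.1.eigenvalues i := by simpa using hA.1.trace_eq_sum_eigenvalues
  rw [Psi, hd, ht, Real.log_prod (fun i _ => (hA.eigenvalues_pos i).ne')]
  have h := Finset.sum_le_sum (fun i (_ : i ∈ Finset.univ) =>
    Real.log_le_sub_one_of_pos (hA.eigenvalues_pos i))
  rw [Finset.sum_sub_distrib] at h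
  simp only [Finset.sum_const, Finset.card_univ, Fintype.card_fin, nsmul_eq_mul, mul_one] at h
  linarith

lemma isSymm_of_posDef {d : ℕ} {A : Matrix (Fin d) (Fin d) ℝ} (hA : A.PosDef) : Aᵀ = A := by
  have := hA.1
  rwa [Matrix.IsHermitian, Matrix.conjTranspose_eq_transpose_of_trivial] at this

lemma quad_pos {d : ℕ} {A : Matrix (Fin d) (Fin d) ℝ} (hA : A.PosDef) {v : Fin d → ℝ}
    (hv : v ≠ 0) : 0 < v ⬝ᵥ (A *ᵥ v) := by
  simpa using hA.dotProduct_mulVec_pos hv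

lemma quad_nonneg {d : ℕ} {A : Matrix (Fin d) (Fin d) ℝ} (hA : A.PosSemidef) (v : Fin d → ℝ) :
    0 ≤ v ⬝ᵥ (A *ᵥ v) := by
  simpa using hA.dotProduct_mulVec_nonneg v

lemma dot_mulVec_comm {d : ℕ} {A : Matrix (Fin d) (Fin d) ℝ} (hA : Aᵀ = A) (v w : Fin d → ℝ) :
    v ⬝ᵥ (A *ᵥ w) = w ⬝ᵥ (A *ᵥ v) := by
  rw [Matrix.dotProduct_mulVec, ← Matrix.mulVec_transpose, hA, dotProduct_comm]

/-- Determinant of the BFGS update, from Sylvester's identity for the rank-two factor. -/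
lemma det_bfgsUpdate {d : ℕ} {B : Matrix (Fin d) (Fin d) ℝ} (hB : B.PosDef) {s y : Fin d → ℝ}
    (hsy : 0 < s ⬝ᵥ y) :
    (bfgsUpdate B s y).det = B.det * ((s ⬝ᵥ y) / (s ⬝ᵥ (B *ᵥ s))) := by
  have hs : s ≠ 0 := by rintro rfl; simp at hsy
  have hsBs := quad_pos hB hs
  have hT := isSymm_of_posDef hB
  have hu : IsUnit B.det := hB.det_pos.ne'.isUnit
  set p := s ⬝ᵥ (B *ᵥ s) with hp
  set U : Matrix (Fin d) (Fin 2) ℝ :=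
    Matrix.of fun i j => if j = 0 then -p⁻¹ * s i else (s ⬝ᵥ y)⁻¹ * (B⁻¹ *ᵥ y) i with hU
  set V : Matrix (Fin 2) (Fin d) ℝ :=
    Matrix.of fun j i => if j = 0 then (B *ᵥ s) i else y i with hV
  have hBU : B * U = Matrix.of fun i j => if j = 0 then -p⁻¹ * (B *ᵥ s) i
      else (s ⬝ᵥ y)⁻¹ * y i := by
    ext i j
    fin_cases j
    · simp [hU, Matrix.mul_apply, Matrix.mulVec, dotProduct, Finset.mul_sum, mul_left_comm]
    · have : y i = (B *ᵥ (B⁻¹ *ᵥ y)) i := by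
        rw [Matrix.mulVec_mulVec, Matrix.mul_nonsing_inv _ hu, Matrix.one_mulVec]
      simp only [Matrix.of_apply, Fin.mk_one, one_ne_zero, if_false]
      rw [this]
      simp [hU, Matrix.mul_apply, Matrix.mulVec, dotProduct, Finset.mul_sum, mul_left_comm]
  have hfac : bfgsUpdate B s y = B * (1 + U * V) := by
    rw [mul_add, mul_one, ← Matrix.mul_assoc, hBU]
    ext i j
    simp [bfgsUpdate, hV, Matrix.mul_apply, hT, Matrix.vecMulVec_apply, ← hp]
    ring
  have h00 : (V * U) 0 0 = -1 := by
    have : (V * U) 0 0 = -p⁻¹ * (s ⬝ᵥ (B *ᵥ s)) := by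
      simp only [hU, hV, Matrix.mul_apply, Matrix.of_apply, if_true, dotProduct, Finset.mul_sum]
      exact Finset.sum_congr rfl fun i _ => by ring
    rw [this, ← hp]; field_simp
  have h01 : (V * U) 0 1 = 1 := by
    have : (V * U) 0 1 = (s ⬝ᵥ y)⁻¹ * ((B *ᵥ s) ⬝ᵥ (B⁻¹ *ᵥ y)) := by
      simp only [hU, hV, Matrix.mul_apply, Matrix.of_apply, if_true, one_ne_zero, if_false,
        dotProduct, Finset.mul_sum]
      exact Finset.sum_congr rfl fun i _ => by ring
    rw [this, dotProduct_comm (B *ᵥ s), dot_mulVec_comm hT, Matrix.mulVec_mulVec,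
      Matrix.mul_nonsing_inv _ hu, Matrix.one_mulVec]
    field_simp
  have h10 : (V * U) 1 0 = -p⁻¹ * (s ⬝ᵥ y) := by
    simp only [hU, hV, Matrix.mul_apply, Matrix.of_apply, if_true, one_ne_zero, if_false,
        dotProduct, Finset.mul_sum]
    exact Finset.sum_congr rfl fun i _ => by ring
  rw [hfac, Matrix.det_mul, Matrix.det_one_add_mul_comm, Matrix.det_fin_two]
  simp [h00, h01, h10]
  left
  ring

lemma posDef_bfgsUpdate {d : ℕ} {B : Matrix (Fin d) (Fin d) ℝ} (hB : B.PosDef) {s y : Fin d → ℝ}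
    (hsy : 0 < s ⬝ᵥ y) : (bfgsUpdate B s y).PosDef := by
  have hs : s ≠ 0 := by rintro rfl; simp at hsy
  have hsBs := quad_pos hB hs
  have hT := isSymm_of_posDef hB
  have hpsd : (bfgsUpdate B s y).PosSemidef := by
    refine Matrix.PosSemidef.of_dotProduct_mulVec_nonneg ?_ ?_
    · rw [Matrix.IsHermitian, Matrix.conjTranspose_eq_transpose_of_trivial, bfgsUpdate, hT]
      simp [Matrix.transpose_vecMulVec, hT]
    · intro x
      have hz := quad_nonneg hB.posSemidef
        (x - ((s ⬝ᵥ (B *ᵥ x)) / (s ⬝ᵥ (B *ᵥ s))) • s)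
      have hxs := dot_mulVec_comm hT x s
      simp only [Matrix.mulVec_sub, Matrix.mulVec_smul, dotProduct_sub, sub_dotProduct,
        dotProduct_smul, smul_dotProduct, smul_eq_mul, hxs] at hz
      have hval : star x ⬝ᵥ (bfgsUpdate B s y *ᵥ x) = x ⬝ᵥ (B *ᵥ x)
          - (s ⬝ᵥ (B *ᵥ x)) ^ 2 / (s ⬝ᵥ (B *ᵥ s)) + (x ⬝ᵥ y) ^ 2 / (s ⬝ᵥ y) := by
        have e1 : (B *ᵥ s) ⬝ᵥ x = s ⬝ᵥ (B *ᵥ x) := by rw [dotProduct_comm, hxs]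
        simp only [bfgsUpdate, hT, star_trivial, Matrix.add_mulVec, Matrix.sub_mulVec,
          Matrix.smul_mulVec, Matrix.vecMulVec_mulVec, dotProduct_add, dotProduct_sub,
          dotProduct_smul, smul_eq_mul, e1, hxs,
          op_smul_eq_smul, dotProduct_comm y x]
        ring
      rw [hval]
      have : 0 ≤ (x ⬝ᵥ y) ^ 2 / (s ⬝ᵥ y) := by positivity
      have e : (s ⬝ᵥ (B *ᵥ x)) / (s ⬝ᵥ (B *ᵥ s)) * (s ⬝ᵥ (B *ᵥ s)) = s ⬝ᵥ (B *ᵥ x) := by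
        field_simp
      rw [e] at hz
      have e2 : (s ⬝ᵥ (B *ᵥ x)) ^ 2 / (s ⬝ᵥ (B *ᵥ s))
        = (s ⬝ᵥ (B *ᵥ x)) / (s ⬝ᵥ (B *ᵥ s)) * (s ⬝ᵥ (B *ᵥ x)) := by ring
      linarith
  have hdet : 0 < (bfgsUpdate B s y).det := by
    rw [det_bfgsUpdate hB hsy]
    have := hB.det_pos
    positivity
  exact hpsd.posDef_iff_isUnit.2 ((Matrix.isUnit_iff_isUnit_det _).2 hdet.ne'.isUnit)

/-- One-step bound on the potential. In terms of the angle `θ` between `s` and `B s`, the argument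
of the logarithm is `cos² θ · ‖s‖² / (s ⬝ y)`. -/
lemma Psi_bfgsUpdate_le {d : ℕ} {B : Matrix (Fin d) (Fin d) ℝ} (hB : B.PosDef)
    {s y : Fin d → ℝ} (hsy : 0 < s ⬝ᵥ y) :
    Psi d (bfgsUpdate B s y) ≤ Psi d B + (y ⬝ᵥ y) / (s ⬝ᵥ y) - 1 +
      Real.log ((s ⬝ᵥ (B *ᵥ s)) ^ 2 / (((B *ᵥ s) ⬝ᵥ (B *ᵥ s)) * (s ⬝ᵥ y))) := by
  have hs : s ≠ 0 := by rintro rfl; simp at hsy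
  have hsBs := quad_pos hB hs
  have hT := isSymm_of_posDef hB
  have hBs : 0 < (B *ᵥ s) ⬝ᵥ (B *ᵥ s) := by
    have hne : B *ᵥ s ≠ 0 := by intro h; rw [h] at hsBs; simp at hsBs
    have h0 := Matrix.dotProduct_star_self_pos_iff.2 hne
    simpa using h0
  have htr : (bfgsUpdate B s y).trace = B.trace
      - ((B *ᵥ s) ⬝ᵥ (B *ᵥ s)) / (s ⬝ᵥ (B *ᵥ s)) + (y ⬝ᵥ y) / (s ⬝ᵥ y) := by
    simp only [bfgsUpdate, hT, Matrix.trace_add, Matrix.trace_sub, Matrix.trace_smul,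
      Matrix.trace_vecMulVec, smul_eq_mul]
    ring
  have hdB := hB.det_pos
  set p := s ⬝ᵥ (B *ᵥ s)
  set r := (B *ᵥ s) ⬝ᵥ (B *ᵥ s)
  set σ := s ⬝ᵥ y
  have h1 := Real.log_le_sub_one_of_pos (x := r / p) (by positivity)
  rw [Real.log_div hBs.ne' hsBs.ne'] at h1
  rw [Psi, Psi, htr, det_bfgsUpdate hB hsy, Real.log_mul hdB.ne' (by positivity),
    Real.log_div hsy.ne' hsBs.ne', Real.log_div (by positivity) (by positivity),
    Real.log_mul hBs.ne' hsy.ne', Real.log_pow]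
  push_cast
  linarith

/-! ### Calculus along segments for strongly self-concordant functions -/

/-- Second-order comparison: a function with nonnegative second derivative on `[0, 1]` lies above
its tangent at `0`. -/
lemma tangent_le {F F' F'' : ℝ → ℝ} (h1 : ∀ t ∈ Set.Icc (0 : ℝ) 1, HasDerivAt F (F' t) t)
    (h2 : ∀ t ∈ Set.Icc (0 : ℝ) 1, HasDerivAt F' (F'' t) t)
    (h3 : ∀ t ∈ Set.Icc (0 : ℝ) 1, 0 ≤ F'' t) : F 0 + F' 0 ≤ F 1 := by
  have m1 : MonotoneOn F' (Set.Icc 0 1) := by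
    apply monotoneOn_of_deriv_nonneg (convex_Icc 0 1)
    · exact fun t ht => (h2 t ht).continuousAt.continuousWithinAt
    · exact fun t ht => (h2 t (interior_subset ht)).differentiableAt.differentiableWithinAt
    · exact fun t ht => by rw [(h2 t (interior_subset ht)).deriv]; exact h3 t (interior_subset ht)
  have hd : ∀ t ∈ Set.Icc (0 : ℝ) 1, HasDerivAt (fun t => F t - F' 0 * t) (F' t - F' 0) t := by
    intro t ht
    simpa using (h1 t ht).fun_sub ((hasDerivAt_id' t).const_mul (F' 0))
  have m2 : MonotoneOn (fun t => F t - F' 0 * t) (Set.Icc 0 1) := by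
    apply monotoneOn_of_deriv_nonneg (convex_Icc 0 1)
    · exact fun t ht => (hd t ht).continuousAt.continuousWithinAt
    · exact fun t ht => (hd t (interior_subset ht)).differentiableAt.differentiableWithinAt
    · intro t ht
      have ht' := interior_subset ht
      rw [(hd t ht').deriv]
      linarith [m1 (Set.left_mem_Icc.2 zero_le_one) ht' ht'.1]
  have := m2 (Set.left_mem_Icc.2 zero_le_one) (Set.right_mem_Icc.2 zero_le_one) zero_le_one
  simp at this
  linarith

section Smooth

variable {d : ℕ} {f : (Fin d → ℝ) → ℝ} {grad : (Fin d → ℝ) → (Fin d → ℝ)}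
  {hess : (Fin d → ℝ) → Matrix (Fin d) (Fin d) ℝ}

lemma hasDerivAt_line (x u : Fin d → ℝ) (t : ℝ) : HasDerivAt (fun t : ℝ => x + t • u) u t := by
  simpa using ((hasDerivAt_id t).smul_const u).const_add x

lemma hasDerivAt_f_line (hf : ContDiff ℝ 2 f) (hgrad : ∀ x v, fderiv ℝ f x v = grad x ⬝ᵥ v)
    (x u : Fin d → ℝ) (t : ℝ) :
    HasDerivAt (fun t : ℝ => f (x + t • u)) (grad (x + t • u) ⬝ᵥ u) t := by
  have h := (hf.differentiable (by norm_num) (x + t • u)).hasFDerivAt.comp_hasDerivAt t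
    (hasDerivAt_line x u t)
  rw [hgrad] at h
  exact h

lemma differentiable_grad (hf : ContDiff ℝ 2 f)
    (hgrad : ∀ x v, fderiv ℝ f x v = grad x ⬝ᵥ v) : Differentiable ℝ grad := by
  rw [differentiable_pi]
  intro i
  have h : (fun x => grad x i) = fun x => fderiv ℝ f x (Pi.single i 1) := by
    funext x; rw [hgrad]; simp
  rw [h]
  have h1 : ContDiff ℝ 1 (fderiv ℝ f) := hf.fderiv_right (by norm_num)
  exact (h1.differentiable (by norm_num)).clm_apply (differentiable_const _)

lemma hasDerivAt_grad_line (hf : ContDiff ℝ 2 f) (hgrad : ∀ x v, fderiv ℝ f x v = grad x ⬝ᵥ v)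
    (hhess : ∀ x v, fderiv ℝ grad x v = hess x *ᵥ v) (w x u : Fin d → ℝ) (t : ℝ) :
    HasDerivAt (fun t : ℝ => grad (x + t • u) ⬝ᵥ w) (w ⬝ᵥ (hess (x + t • u) *ᵥ u)) t := by
  have h := (differentiable_grad hf hgrad (x + t • u)).hasFDerivAt.comp_hasDerivAt t
    (hasDerivAt_line x u t)
  rw [hhess, hasDerivAt_pi] at h
  have h2 := HasDerivAt.fun_sum (u := Finset.univ) (fun i _ => (h i).mul_const (w i))
  rw [dotProduct_comm w]
  exact h2

lemma grad_eq_zero (hgrad : ∀ x v, fderiv ℝ f x v = grad x ⬝ᵥ v) {xs : Fin d → ℝ}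
    (hmin : ∀ y, f xs ≤ f y) : grad xs = 0 := by
  have h : fderiv ℝ f xs = 0 :=
    IsLocalMin.fderiv_eq_zero (Filter.Eventually.of_forall hmin)
  refine dotProduct_eq_zero _ fun v => ?_
  rw [← hgrad, h]; rfl

/-- Quadratic lower bound for `f` from a lower bound on its curvature along a segment. -/
lemma second_order_le (hf : ContDiff ℝ 2 f) (hgrad : ∀ x v, fderiv ℝ f x v = grad x ⬝ᵥ v)
    (hhess : ∀ x v, fderiv ℝ grad x v = hess x *ᵥ v) (x u : Fin d → ℝ) {k : ℝ}
    (hk : ∀ t ∈ Set.Icc (0 : ℝ) 1, k ≤ u ⬝ᵥ (hess (x + t • u) *ᵥ u)) :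
    f x + grad x ⬝ᵥ u + k / 2 ≤ f (x + u) := by
  have h := tangent_le (F := fun t => f (x + t • u) - k / 2 * t ^ 2)
    (F' := fun t => grad (x + t • u) ⬝ᵥ u - k * t)
    (F'' := fun t => u ⬝ᵥ (hess (x + t • u) *ᵥ u) - k)
    (fun t _ => by
      refine ((hasDerivAt_f_line hf hgrad x u t).fun_sub
        ((hasDerivAt_pow 2 t).const_mul (k / 2))).congr_deriv ?_
      norm_num; ring)
    (fun t _ => by
      simpa using (hasDerivAt_grad_line hf hgrad hhess u x u t).fun_sub
        ((hasDerivAt_id' t).const_mul k))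
    (fun t ht => by linarith [hk t ht])
  simp at h
  linarith

/-- Strong self-concordance read as a comparison of quadratic forms. -/
lemma hess_le {M : ℝ} (hssc : StronglySelfConcordant hess M) (x y z v : Fin d → ℝ) :
    v ⬝ᵥ (hess x *ᵥ v) ≤
      (1 + M * Real.sqrt ((x - y) ⬝ᵥ (hess z *ᵥ (x - y)))) * (v ⬝ᵥ (hess y *ᵥ v)) := by
  have h := quad_nonneg (hssc x y z) v
  simp only [Matrix.sub_mulVec, Matrix.smul_mulVec, dotProduct_sub, dotProduct_smul,
    smul_eq_mul] at h
  linarith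

/-- The local distance to the minimizer is controlled by the function value gap. -/
lemma omegaFn_dist_le (hf : ContDiff ℝ 2 f) (hgrad : ∀ x v, fderiv ℝ f x v = grad x ⬝ᵥ v)
    (hhess : ∀ x v, fderiv ℝ grad x v = hess x *ᵥ v) (hpd : ∀ x, (hess x).PosDef)
    {M : ℝ} (hM : 0 < M) (hssc : StronglySelfConcordant hess M) {xs : Fin d → ℝ}
    (hmin : ∀ y, f xs ≤ f y) (x : Fin d → ℝ) :
    omegaFn (M * Real.sqrt ((x - xs) ⬝ᵥ (hess xs *ᵥ (x - xs))) / 2) ≤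
      M ^ 2 * (f x - f xs) / 4 := by
  set u := x - xs with hu
  set r := Real.sqrt (u ⬝ᵥ (hess xs *ᵥ u)) with hr
  have hr0 : 0 ≤ r := Real.sqrt_nonneg _
  have hrsq : r ^ 2 = u ⬝ᵥ (hess xs *ᵥ u) := Real.sq_sqrt (quad_nonneg (hpd xs).posSemidef u)
  set a := M * r / 2 with ha
  have ha0 : 0 ≤ a := by positivity
  -- The curvature along the segment decays at most like `r² / (1 + a t)²`.
  have hcurv : ∀ t ∈ Set.Icc (0 : ℝ) 1,
      r ^ 2 / (1 + a * t) ^ 2 ≤ u ⬝ᵥ (hess (xs + t • u) *ᵥ u) := by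
    intro t ht
    have hH := quad_nonneg (hpd (xs + t • u)).posSemidef u
    have h := hess_le hssc xs (xs + t • u) xs u
    have hs : Real.sqrt ((xs - (xs + t • u)) ⬝ᵥ (hess xs *ᵥ (xs - (xs + t • u)))) = t * r := by
      have : xs - (xs + t • u) = (-t) • u := by simp
      rw [this, Matrix.mulVec_smul, dotProduct_smul, smul_dotProduct, smul_smul, smul_eq_mul,
        neg_mul_neg, Real.sqrt_mul (mul_self_nonneg t), Real.sqrt_mul_self ht.1]
    rw [hs, ← hrsq] at h
    have h0 : 0 ≤ a * t := mul_nonneg ha0 ht.1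
    rw [div_le_iff₀ (by positivity)]
    have : 1 + M * (t * r) ≤ (1 + a * t) ^ 2 := by
      rw [ha] at *
      nlinarith [sq_nonneg (M * r / 2 * t)]
    nlinarith
  have hpos : ∀ t ∈ Set.Icc (0 : ℝ) 1, 0 < 1 + a * t := fun t ht => by
    have := mul_nonneg ha0 ht.1
    linarith
  have hlin : ∀ t : ℝ, HasDerivAt (fun t : ℝ => a * t) a t := fun t => by
    simpa using (hasDerivAt_id t).const_mul a
  have h := tangent_le (F := fun t => f (xs + t • u) - 4 / M ^ 2 * omegaFn (a * t))
    (F' := fun t => grad (xs + t • u) ⬝ᵥ u - 4 / M ^ 2 * (a * t / (1 + a * t) * a))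
    (F'' := fun t => u ⬝ᵥ (hess (xs + t • u) *ᵥ u) - r ^ 2 / (1 + a * t) ^ 2)
    (fun t ht => (hasDerivAt_f_line hf hgrad xs u t).sub
      (((hasDerivAt_omegaFn (hpos t ht)).comp t (hlin t)).const_mul _))
    (fun t ht => by
      have hd := ((hlin t).div ((hlin t).const_add 1) (hpos t ht).ne').mul_const a
      refine ((hasDerivAt_grad_line hf hgrad hhess u xs u t).fun_sub
        (hd.const_mul (4 / M ^ 2))).congr_deriv ?_
      have := (hpos t ht).ne'
      have e : a * (1 + a * t) - a * t * a = a := by ring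
      rw [e, ha]
      field_simp
      ring)
    (fun t ht => by linarith [hcurv t ht])
  have h0 : omegaFn 0 = 0 := by simp [omegaFn]
  simp only [zero_smul, add_zero, mul_zero, h0, zero_div, zero_mul, sub_zero, one_smul, mul_one,
    grad_eq_zero hgrad hmin, zero_dotProduct] at h
  have hx : xs + u = x := by simp [hu]
  rw [hx] at h
  have h4 : 4 / M ^ 2 * omegaFn a ≤ f x - f xs := by linarith
  rw [div_mul_eq_mul_div, div_le_iff₀ (by positivity)] at h4
  linarith

/-- Secant bound. If all Hessians on the segment are at most `k P` as quadratic forms and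
`P w = y` for the gradient difference `y`, then `‖y‖²_{P⁻¹} = y ⬝ w ≤ k (s ⬝ y)`. -/
lemma secant_le (hf : ContDiff ℝ 2 f) (hgrad : ∀ x v, fderiv ℝ f x v = grad x ⬝ᵥ v)
    (hhess : ∀ x v, fderiv ℝ grad x v = hess x *ᵥ v) (hpd : ∀ x, (hess x).PosDef)
    (x s w : Fin d → ℝ) (P : Matrix (Fin d) (Fin d) ℝ) {k : ℝ} (hk : 0 < k)
    (hw : P *ᵥ w = grad (x + s) - grad x)
    (hub : ∀ t ∈ Set.Icc (0 : ℝ) 1, w ⬝ᵥ (hess (x + t • s) *ᵥ w) ≤ k * (w ⬝ᵥ (P *ᵥ w))) :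
    w ⬝ᵥ (P *ᵥ w) ≤ k * (s ⬝ᵥ (grad (x + s) - grad x)) := by
  -- Integrates `0 ≤ (k⁻¹ w - s)ᵀ H (k⁻¹ w - s)` over the segment.
  have hd : ∀ t : ℝ, HasDerivAt (fun t : ℝ => grad (x + t • s) ⬝ᵥ s
      - 2 * k⁻¹ * (grad (x + t • s) ⬝ᵥ w) + k⁻¹ * (w ⬝ᵥ (P *ᵥ w)) * t)
      (s ⬝ᵥ (hess (x + t • s) *ᵥ s) - 2 * k⁻¹ * (w ⬝ᵥ (hess (x + t • s) *ᵥ s))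
        + k⁻¹ * (w ⬝ᵥ (P *ᵥ w))) t := by
    intro t
    simpa using ((hasDerivAt_grad_line hf hgrad hhess s x s t).fun_sub
      ((hasDerivAt_grad_line hf hgrad hhess w x s t).const_mul (2 * k⁻¹))).fun_add
      ((hasDerivAt_id' t).const_mul (k⁻¹ * (w ⬝ᵥ (P *ᵥ w))))
  have hm : MonotoneOn (fun t : ℝ => grad (x + t • s) ⬝ᵥ s
      - 2 * k⁻¹ * (grad (x + t • s) ⬝ᵥ w) + k⁻¹ * (w ⬝ᵥ (P *ᵥ w)) * t) (Set.Icc 0 1) := by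
    apply monotoneOn_of_deriv_nonneg (convex_Icc 0 1)
    · exact fun t ht => (hd t).continuousAt.continuousWithinAt
    · exact fun t ht => (hd t).differentiableAt.differentiableWithinAt
    · intro t ht
      rw [(hd t).deriv]
      have h1 := hub t (interior_subset ht)
      have h2 := quad_nonneg (hpd (x + t • s)).posSemidef (k⁻¹ • w - s)
      have h3 := dot_mulVec_comm (isSymm_of_posDef (hpd (x + t • s))) s w
      simp only [Matrix.mulVec_sub, Matrix.mulVec_smul, dotProduct_sub, sub_dotProduct,
        dotProduct_smul, smul_dotProduct, smul_eq_mul, h3] at h2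
      have h4 : k⁻¹ * (k⁻¹ * (w ⬝ᵥ (hess (x + t • s) *ᵥ w))) ≤ k⁻¹ * (w ⬝ᵥ (P *ᵥ w)) := by
        apply mul_le_mul_of_nonneg_left _ (by positivity)
        rw [inv_mul_le_iff₀ hk]
        exact h1
      linarith
  have h := hm (Set.left_mem_Icc.2 zero_le_one) (Set.right_mem_Icc.2 zero_le_one) zero_le_one
  simp only [zero_smul, add_zero, mul_zero, one_smul, mul_one] at h
  have e1 : s ⬝ᵥ (grad (x + s) - grad x) = grad (x + s) ⬝ᵥ s - grad x ⬝ᵥ s := by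
    rw [dotProduct_comm, sub_dotProduct]
  have e2 : w ⬝ᵥ (P *ᵥ w) = grad (x + s) ⬝ᵥ w - grad x ⬝ᵥ w := by
    rw [hw, dotProduct_comm, sub_dotProduct]
  rw [e1, ← inv_mul_le_iff₀ hk]
  rw [e2] at h ⊢
  linarith

end Smooth

/-! ### The update in transformed coordinates and a single BFGS step -/

lemma posDef_conj {d : ℕ} {B S : Matrix (Fin d) (Fin d) ℝ} (hB : B.PosDef) (hS : S.PosDef)
    {c : ℝ} (hc : 0 < c) : (c⁻¹ • (S⁻¹ * B * S⁻¹)).PosDef := by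
  have hT := hS.inv
  have h : (S⁻¹ᴴ * B * S⁻¹).PosDef :=
    hB.conjTranspose_mul_mul_same (Matrix.mulVec_injective_of_isUnit hT.isUnit)
  rw [hT.1.eq] at h
  exact h.smul (inv_pos.2 hc)

lemma dot_inv_mulVec {d : ℕ} {S : Matrix (Fin d) (Fin d) ℝ} (hS : S.PosDef) (v w : Fin d → ℝ) :
    (S *ᵥ v) ⬝ᵥ (S⁻¹ *ᵥ w) = v ⬝ᵥ w := by
  rw [dotProduct_comm, dot_mulVec_comm (isSymm_of_posDef hS), Matrix.mulVec_mulVec,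
    Matrix.mul_nonsing_inv _ hS.det_pos.ne'.isUnit, Matrix.one_mulVec]

lemma conj_mulVec {d : ℕ} {S : Matrix (Fin d) (Fin d) ℝ} (hS : S.PosDef)
    (B : Matrix (Fin d) (Fin d) ℝ) (c : ℝ) (s : Fin d → ℝ) :
    (c⁻¹ • (S⁻¹ * B * S⁻¹)) *ᵥ (S *ᵥ s) = c⁻¹ • (S⁻¹ *ᵥ (B *ᵥ s)) := by
  rw [Matrix.smul_mulVec, Matrix.mulVec_mulVec, Matrix.mul_assoc,
    Matrix.nonsing_inv_mul _ hS.det_pos.ne'.isUnit, Matrix.mul_one, Matrix.mulVec_mulVec]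

/-- The BFGS update commutes with the change of variables `x ↦ S x` and with rescaling. -/
lemma conj_bfgsUpdate {d : ℕ} {B S : Matrix (Fin d) (Fin d) ℝ} (hB : Bᵀ = B) (hS : S.PosDef)
    {c : ℝ} (hc : 0 < c) (s y : Fin d → ℝ) :
    c⁻¹ • (S⁻¹ * bfgsUpdate B s y * S⁻¹) =
      bfgsUpdate (c⁻¹ • (S⁻¹ * B * S⁻¹)) (S *ᵥ s) (c⁻¹ • (S⁻¹ *ᵥ y)) := by
  have hT := isSymm_of_posDef hS.inv
  have hsym : (c⁻¹ • (S⁻¹ * B * S⁻¹))ᵀ = c⁻¹ • (S⁻¹ * B * S⁻¹) := by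
    rw [Matrix.transpose_smul, Matrix.transpose_mul, Matrix.transpose_mul, hT, hB,
      Matrix.mul_assoc]
  have hv : ∀ a b : Fin d → ℝ, S⁻¹ * vecMulVec a b * S⁻¹ = vecMulVec (S⁻¹ *ᵥ a) (S⁻¹ *ᵥ b) := by
    intro a b
    rw [Matrix.mul_vecMulVec, Matrix.vecMulVec_mul, ← Matrix.mulVec_transpose, hT]
  have hc' : c⁻¹ ≠ 0 := (inv_pos.2 hc).ne'
  rw [bfgsUpdate, bfgsUpdate, hsym, conj_mulVec hS, hB]
  simp only [dotProduct_smul, dot_inv_mulVec hS, Matrix.mul_add, Matrix.mul_sub, Matrix.add_mul,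
    Matrix.sub_mul, Matrix.mul_smul, Matrix.smul_mul, hv, smul_add, smul_sub, smul_smul,
    smul_eq_mul, Matrix.smul_vecMulVec, Matrix.vecMulVec_smul]
  congr 2
  · congr 1
    field_simp
  · rw [mul_inv, inv_inv]
    field_simp

section Step

variable {d : ℕ} {f : (Fin d → ℝ) → ℝ} {grad : (Fin d → ℝ) → (Fin d → ℝ)}
  {hess : (Fin d → ℝ) → Matrix (Fin d) (Fin d) ℝ}

/-- Two-sided comparison with the Hessian at `xs` for points `z` with `M ‖z - xs‖_{xs} ≤ D`. -/
lemma hess_near {M : ℝ} (hssc : StronglySelfConcordant hess M)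
    (hpd : ∀ x, (hess x).PosDef) {xs z : Fin d → ℝ} {D : ℝ} (hD : 0 ≤ D)
    (hz : M ^ 2 * ((z - xs) ⬝ᵥ (hess xs *ᵥ (z - xs))) ≤ D ^ 2) (v : Fin d → ℝ) :
    v ⬝ᵥ (hess z *ᵥ v) ≤ (1 + D) * (v ⬝ᵥ (hess xs *ᵥ v)) ∧
    v ⬝ᵥ (hess xs *ᵥ v) ≤ (1 + D) * (v ⬝ᵥ (hess z *ᵥ v)) := by
  have hr : M * Real.sqrt ((z - xs) ⬝ᵥ (hess xs *ᵥ (z - xs))) ≤ D := by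
    apply le_of_sq_le_sq _ hD
    rw [mul_pow, Real.sq_sqrt (quad_nonneg (hpd xs).posSemidef _)]
    exact hz
  have hr' : M * Real.sqrt ((xs - z) ⬝ᵥ (hess xs *ᵥ (xs - z))) ≤ D := by
    rw [← neg_sub z xs, Matrix.mulVec_neg, neg_dotProduct_neg]
    exact hr
  constructor
  · refine (hess_le hssc z xs xs v).trans ?_
    have := quad_nonneg (hpd xs).posSemidef v
    gcongr
  · refine (hess_le hssc xs z xs v).trans ?_
    have := quad_nonneg (hpd z).posSemidef v
    gcongr

lemma ball_segment {P : Matrix (Fin d) (Fin d) ℝ} (hP : P.PosDef) {a s : Fin d → ℝ} {R : ℝ}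
    (h0 : a ⬝ᵥ (P *ᵥ a) ≤ R) (h1 : (a + s) ⬝ᵥ (P *ᵥ (a + s)) ≤ R) {t : ℝ}
    (ht : t ∈ Set.Icc (0 : ℝ) 1) : (a + t • s) ⬝ᵥ (P *ᵥ (a + t • s)) ≤ R := by
  have hs := quad_nonneg hP.posSemidef s
  have hc := dot_mulVec_comm (isSymm_of_posDef hP) s a
  simp only [Matrix.mulVec_add, Matrix.mulVec_smul, dotProduct_add, add_dotProduct,
    dotProduct_smul, smul_dotProduct, smul_eq_mul, hc] at h1 ⊢
  nlinarith [mul_le_mul_of_nonneg_left h1 ht.1,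
    mul_le_mul_of_nonneg_left h0 (sub_nonneg.2 ht.2),
    mul_nonneg (mul_nonneg ht.1 (sub_nonneg.2 ht.2)) hs]

/-- Gradient domination in the norm of `P⁻¹ = (S S)⁻¹`. -/
lemma gradient_domination (hf : ContDiff ℝ 2 f)
    (hgrad : ∀ x v, fderiv ℝ f x v = grad x ⬝ᵥ v)
    (hhess : ∀ x v, fderiv ℝ grad x v = hess x *ᵥ v) (hpd : ∀ x, (hess x).PosDef)
    {M : ℝ} (hM : 0 < M) (hssc : StronglySelfConcordant hess M) {xs x : Fin d → ℝ}
    {S : Matrix (Fin d) (Fin d) ℝ} (hS : S.PosDef) (hSsq : S * S = hess xs)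
    {D : ℝ} (hD : 0 ≤ D) (hx : M ^ 2 * ((x - xs) ⬝ᵥ (hess xs *ᵥ (x - xs))) ≤ D ^ 2) :
    2 / (1 + D) * (f x - f xs) ≤ (S⁻¹ *ᵥ grad x) ⬝ᵥ (S⁻¹ *ᵥ grad x) := by
  set u := xs - x with hu
  have h1D : 0 < 1 + D := by linarith
  have hM2 : 0 < M ^ 2 := by positivity
  have hcurv : ∀ t ∈ Set.Icc (0 : ℝ) 1,
      (u ⬝ᵥ (hess xs *ᵥ u)) / (1 + D) ≤ u ⬝ᵥ (hess (x + t • u) *ᵥ u) := by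
    intro t ht
    rw [div_le_iff₀ h1D, mul_comm]
    refine (hess_near hssc hpd hD ?_ u).2
    have hb := ball_segment (hpd xs) (a := x - xs) (s := u) (R := D ^ 2 / M ^ 2)
      (by rwa [le_div_iff₀ hM2, mul_comm]) (by simp [hu]; positivity) ht
    rw [le_div_iff₀ hM2, mul_comm] at hb
    have e : x + t • u - xs = x - xs + t • u := by abel
    rw [e]
    exact hb
  have h := second_order_le hf hgrad hhess x u hcurv
  have e : x + u = xs := by simp [hu]
  have e1 : u ⬝ᵥ (hess xs *ᵥ u) = (S *ᵥ u) ⬝ᵥ (S *ᵥ u) := by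
    rw [← hSsq, ← Matrix.mulVec_mulVec, dot_mulVec_comm (isSymm_of_posDef hS)]
  have e2 : grad x ⬝ᵥ u = (S *ᵥ u) ⬝ᵥ (S⁻¹ *ᵥ grad x) := by
    rw [dot_inv_mulVec hS, dotProduct_comm]
  rw [e, e1, e2] at h
  have hsq : 0 ≤ ((1 + D) • (S⁻¹ *ᵥ grad x) + S *ᵥ u) ⬝ᵥ ((1 + D) • (S⁻¹ *ᵥ grad x) + S *ᵥ u) := by
    simpa using dotProduct_star_self_nonneg ((1 + D) • (S⁻¹ *ᵥ grad x) + S *ᵥ u)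
  simp only [dotProduct_add, add_dotProduct, dotProduct_smul, smul_dotProduct, smul_eq_mul,
    dotProduct_comm (S⁻¹ *ᵥ grad x) (S *ᵥ u)] at hsq
  rw [div_mul_eq_mul_div, div_le_iff₀ h1D]
  set A := (S *ᵥ u) ⬝ᵥ (S *ᵥ u)
  set E := (S *ᵥ u) ⬝ᵥ (S⁻¹ *ᵥ grad x)
  set G := (S⁻¹ *ᵥ grad x) ⬝ᵥ (S⁻¹ *ᵥ grad x)
  have h5 : f x - f xs ≤ -E - A / (1 + D) / 2 := by linarith
  have h6 : 0 ≤ (1 + D) * G + 2 * E + A / (1 + D) := by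
    have h7 : (1 + D) * G + 2 * E + A / (1 + D)
      = ((1 + D) * ((1 + D) * G) + (1 + D) * E + ((1 + D) * E + A)) / (1 + D) := by
      field_simp
      ring
    rw [h7]
    refine div_nonneg ?_ h1D.le
    linarith
  linarith

/-- One BFGS step from a non-optimal point. The number `a` is `cos² θ · ‖s‖² / (s ⬝ y)` in the
metric of `hess xs`; it governs both the decrease of `f` and the change of the potential, the
latter for the metric `c • hess xs` with any `c > 0`. -/
lemma bfgs_step (hf : ContDiff ℝ 2 f) (hgrad : ∀ x v, fderiv ℝ f x v = grad x ⬝ᵥ v)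
    (hhess : ∀ x v, fderiv ℝ grad x v = hess x *ᵥ v) (hpd : ∀ x, (hess x).PosDef)
    {M : ℝ} (hM : 0 < M) (hssc : StronglySelfConcordant hess M) {xs x s : Fin d → ℝ}
    {S B : Matrix (Fin d) (Fin d) ℝ} (hS : S.PosDef) (hSsq : S * S = hess xs) (hB : B.PosDef)
    {D α β η : ℝ} (hD : 0 ≤ D) (hα : 0 < α) (hβ : β < 1) (hη : 0 < η)
    (hs : s = η • (-(B⁻¹ *ᵥ grad x)))
    (hA : f (x + s) ≤ f x + α * (grad x ⬝ᵥ s)) (hW : β * (grad x ⬝ᵥ s) ≤ grad (x + s) ⬝ᵥ s)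
    (hx : M ^ 2 * ((x - xs) ⬝ᵥ (hess xs *ᵥ (x - xs))) ≤ D ^ 2)
    (hx1 : M ^ 2 * ((x + s - xs) ⬝ᵥ (hess xs *ᵥ (x + s - xs))) ≤ D ^ 2)
    (hgap : f xs < f x) :
    (bfgsUpdate B s (grad (x + s) - grad x)).PosDef ∧ ∃ a : ℝ, 0 < a ∧
      f (x + s) - f xs ≤ (1 - α * (1 - β) * (2 / (1 + D)) * a) * (f x - f xs) ∧
      ∀ c : ℝ, 0 < c → Psi d (c⁻¹ • (S⁻¹ * bfgsUpdate B s (grad (x + s) - grad x) * S⁻¹)) ≤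
        Psi d (c⁻¹ • (S⁻¹ * B * S⁻¹)) + ((1 + D) / c - 1 + Real.log (c * a)) := by
  have h1D : 0 < 1 + D := by linarith
  have hM2 : 0 < M ^ 2 := by positivity
  have hdom := gradient_domination hf hgrad hhess hpd hM hssc hS hSsq hD hx
  set y := grad (x + s) - grad x with hy
  set g := grad x with hg
  have hgap' : 0 < f x - f xs := by linarith
  have hG : 0 < (S⁻¹ *ᵥ g) ⬝ᵥ (S⁻¹ *ᵥ g) := lt_of_lt_of_le (by positivity) hdom
  have hg0 : g ≠ 0 := by
    intro h
    rw [h] at hG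
    simp at hG
  have hBs : B *ᵥ s = (-η) • g := by
    rw [hs, Matrix.mulVec_smul, Matrix.mulVec_neg, Matrix.mulVec_mulVec,
      Matrix.mul_nonsing_inv _ hB.det_pos.ne'.isUnit, Matrix.one_mulVec, smul_neg, neg_smul]
  obtain ⟨w, hw⟩ : ∃ w, w = -(g ⬝ᵥ s) := ⟨_, rfl⟩
  have hw0 : 0 < w := by
    have := quad_pos hB.inv hg0
    rw [hw, hs, dotProduct_smul, dotProduct_neg, smul_eq_mul]
    nlinarith
  have hsg : s ⬝ᵥ g = -w := by rw [hw, dotProduct_comm]; ring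
  have hσw : (1 - β) * w ≤ s ⬝ᵥ y := by
    rw [dotProduct_comm, hy, sub_dotProduct, hw]
    linarith
  have hσ : 0 < s ⬝ᵥ y := lt_of_lt_of_le (mul_pos (by linarith) hw0) hσw
  refine ⟨posDef_bfgsUpdate hB hσ, w ^ 2 / (((S⁻¹ *ᵥ g) ⬝ᵥ (S⁻¹ *ᵥ g)) * (s ⬝ᵥ y)),
    by positivity, ?_, ?_⟩
  · set G := (S⁻¹ *ᵥ g) ⬝ᵥ (S⁻¹ *ᵥ g)
    set σ := s ⬝ᵥ y
    have h1 : α * (1 - β) * (w ^ 2 / (G * σ)) * (2 / (1 + D) * (f x - f xs)) ≤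
        α * (1 - β) * (w ^ 2 / (G * σ)) * G := by
      have : 0 < 1 - β := by linarith
      gcongr
    have h2 : α * (1 - β) * (w ^ 2 / (G * σ)) * G = α * w * (((1 - β) * w) / σ) := by
      field_simp
    have h3 : ((1 - β) * w) / σ ≤ 1 := (div_le_one hσ).2 hσw
    have h4 : α * w * (((1 - β) * w) / σ) ≤ α * w * 1 :=
      mul_le_mul_of_nonneg_left h3 (by positivity)
    have h5 : f (x + s) ≤ f x - α * w := by rw [hw]; linarith
    nlinarith
  · intro c hc
    have hσ' : 0 < (S *ᵥ s) ⬝ᵥ (c⁻¹ • (S⁻¹ *ᵥ y)) := by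
      rw [dotProduct_smul, dot_inv_mulVec hS, smul_eq_mul]
      positivity
    have hP := Psi_bfgsUpdate_le (posDef_conj hB hS hc) hσ'
    rw [← conj_bfgsUpdate (isSymm_of_posDef hB) hS hc, conj_mulVec hS, hBs] at hP
    simp only [Matrix.mulVec_smul, dotProduct_smul, smul_dotProduct, smul_eq_mul,
      dot_inv_mulVec hS, hsg] at hP
    -- `secant_le` with `w = S⁻¹ S⁻¹ y = P⁻¹ y`, where `P = hess xs`.
    have hyb : (S⁻¹ *ᵥ y) ⬝ᵥ (S⁻¹ *ᵥ y) ≤ (1 + D) * (s ⬝ᵥ y) := by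
      have hu := hS.det_pos.ne'.isUnit
      have hPw : hess xs *ᵥ (S⁻¹ *ᵥ (S⁻¹ *ᵥ y)) = y := by
        rw [← hSsq, ← Matrix.mulVec_mulVec, Matrix.mulVec_mulVec _ S S⁻¹,
          Matrix.mul_nonsing_inv _ hu, Matrix.one_mulVec, Matrix.mulVec_mulVec,
          Matrix.mul_nonsing_inv _ hu, Matrix.one_mulVec]
      have h := secant_le hf hgrad hhess hpd x s (S⁻¹ *ᵥ (S⁻¹ *ᵥ y)) (hess xs) h1D hPw
        (fun t ht => by
          refine (hess_near hssc hpd hD ?_ _).1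
          have e1 : x + s - xs = x - xs + s := by abel
          rw [e1] at hx1
          have hb := ball_segment (hpd xs) (a := x - xs) (s := s) (R := D ^ 2 / M ^ 2)
            (by rwa [le_div_iff₀ hM2, mul_comm]) (by rwa [le_div_iff₀ hM2, mul_comm]) ht
          rw [le_div_iff₀ hM2, mul_comm] at hb
          have e : x + t • s - xs = x - xs + t • s := by abel
          rw [e]
          exact hb)
      rw [hPw, dotProduct_comm, dot_mulVec_comm (isSymm_of_posDef hS.inv)] at h
      exact h
    set G := (S⁻¹ *ᵥ g) ⬝ᵥ (S⁻¹ *ᵥ g)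
    set σ := s ⬝ᵥ y
    have e1 : (c⁻¹ * (-η * -w)) ^ 2 / (c⁻¹ * (-η * (c⁻¹ * (-η * G))) * (c⁻¹ * σ))
        = c * (w ^ 2 / (G * σ)) := by
      field_simp
    have e2 : c⁻¹ * (c⁻¹ * ((S⁻¹ *ᵥ y) ⬝ᵥ (S⁻¹ *ᵥ y))) / (c⁻¹ * σ) ≤ (1 + D) / c := by
      have : c⁻¹ * (c⁻¹ * ((S⁻¹ *ᵥ y) ⬝ᵥ (S⁻¹ *ᵥ y))) / (c⁻¹ * σ)
        = ((S⁻¹ *ᵥ y) ⬝ᵥ (S⁻¹ *ᵥ y)) / σ / c := by field_simp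
      rw [this]
      gcongr
      rwa [div_le_iff₀ hσ]
    rw [e1] at hP
    linarith

end Step

/-! ### Global linear rate -/

/-- Improved global linear convergence of BFGS (Theorem 2). -/
theorem bfgs_improved_linear_rate {d : ℕ}
    (f : (Fin d → ℝ) → ℝ)
    (grad : (Fin d → ℝ) → (Fin d → ℝ))
    (hess : (Fin d → ℝ) → Matrix (Fin d) (Fin d) ℝ)
    (hf : ContDiff ℝ 2 f)
    (hgrad : ∀ x v, fderiv ℝ f x v = grad x ⬝ᵥ v)
    (hhess : ∀ x v, fderiv ℝ grad x v = hess x *ᵥ v)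
    (hpd : ∀ x, (hess x).PosDef)
    (M : ℝ) (hM : 0 < M)
    (hssc : StronglySelfConcordant hess M)
    (xstar : Fin d → ℝ) (hmin : ∀ y, f xstar ≤ f y)
    (α β : ℝ) (hα0 : 0 < α) (hα : α < 1/2) (hαβ : α < β) (hβ : β < 1)
    (x : ℕ → Fin d → ℝ) (B : ℕ → Matrix (Fin d) (Fin d) ℝ) (η : ℕ → ℝ)
    (hB0symm : (B 0).IsSymm) (hB0pd : (B 0).PosDef)
    (hx0 : f xstar < f (x 0))
    (hη : ∀ t, 0 < η t)
    (hxupd : ∀ t, x (t+1) = x t + η t • (-((B t)⁻¹ *ᵥ grad (x t))))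
    (hBupd : ∀ t, B (t+1) = bfgsUpdate (B t) (x (t+1) - x t) (grad (x (t+1)) - grad (x t)))
    (hAW1 : ∀ t, f (x (t+1)) ≤
      f (x t) + α * η t * (grad (x t) ⬝ᵥ (-((B t)⁻¹ *ᵥ grad (x t)))))
    (hAW2 : ∀ t, grad (x (t+1)) ⬝ᵥ (-((B t)⁻¹ *ᵥ grad (x t))) ≥
      β * (grad (x t) ⬝ᵥ (-((B t)⁻¹ *ᵥ grad (x t)))))
    (C : ℕ → ℝ) (hC : ∀ t, C t = f (x t) - f xstar)
    (D : ℕ → ℝ) (hD : ∀ t, 0 ≤ D t ∧ omegaFn (D t / 2) = M ^ 2 * C t / 4)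
    (S : Matrix (Fin d) (Fin d) ℝ) (hSpd : S.PosDef) (hSsq : S * S = hess xstar)
    (Bbar : Matrix (Fin d) (Fin d) ℝ)
    (hBbar : Bbar = (1 + D 0)⁻¹ • (S⁻¹ * B 0 * S⁻¹))
    (Btil : Matrix (Fin d) (Fin d) ℝ) (hBtil : Btil = S⁻¹ * B 0 * S⁻¹)
    (t : ℕ)
    (ht : Psi d Btil + 3 * D 0 * (Psi d Bbar + 3 * (1 + D 0) ^ 2 / (α * (1 - β))) ≤ (t : ℝ)) :
    (f (x t) - f xstar) / (f (x 0) - f xstar) ≤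
      (1 - 2 * α * (1 - β) / 3) ^ t := by
  set κ := 2 * α * (1 - β) with hκ
  have hβ' : 0 < 1 - β := by linarith
  have hκ0 : 0 < κ := by positivity
  have hκ1 : κ < 1 := by nlinarith
  have hC0 : 0 < C 0 := by rw [hC]; linarith
  have hCnn : ∀ i, 0 ≤ C i := fun i => by rw [hC]; linarith [hmin (x i)]
  rw [← hC, ← hC]
  have hκt : 1 - 2 * α * (1 - β) / 3 = 1 - κ / 3 := by rw [hκ]
  rw [hκt]
  rcases (hCnn t).eq_or_lt with hCt | hCt
  · rw [← hCt, zero_div]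
    have : 0 < 1 - κ / 3 := by linarith
    positivity
  rw [div_le_iff₀ hC0]
  -- A minimizer is a fixed point of the iteration, so no iterate before `t` is optimal.
  have hfix : ∀ i, C i = 0 → C (i + 1) = 0 := by
    intro i hi
    have hfi : f (x i) = f xstar := by rw [hC] at hi; linarith
    have hg : grad (x i) = 0 := grad_eq_zero hgrad (fun y => by rw [hfi]; exact hmin y)
    have : x (i + 1) = x i := by rw [hxupd, hg]; simp
    rw [hC, this, ← hC, hi]
  have hCpos : ∀ i ≤ t, 0 < C i := by
    intro i hi
    rcases (hCnn i).eq_or_lt with h | h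
    · exfalso
      have := Nat.le_induction (P := fun j _ => C j = 0) h.symm (fun j _ hj => hfix j hj) t hi
      linarith
    · exact h
  have hDmono : ∀ i j, C i ≤ C j → D i ≤ D j := by
    intro i j h
    have h1 : omegaFn (D i / 2) ≤ omegaFn (D j / 2) := by
      rw [(hD i).2, (hD j).2]; gcongr
    have := (omegaFn_strictMonoOn.le_iff_le
      (Set.mem_Ici.2 (by linarith [(hD i).1])) (Set.mem_Ici.2 (by linarith [(hD j).1]))).1 h1
    linarith
  have hdist : ∀ i, M ^ 2 * ((x i - xstar) ⬝ᵥ (hess xstar *ᵥ (x i - xstar))) ≤ D i ^ 2 := by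
    intro i
    have h1 := omegaFn_dist_le hf hgrad hhess hpd hM hssc hmin (x i)
    rw [← hC, ← (hD i).2] at h1
    have h0 : 0 ≤ M * Real.sqrt ((x i - xstar) ⬝ᵥ (hess xstar *ᵥ (x i - xstar))) := by positivity
    have h2 := (omegaFn_strictMonoOn.le_iff_le (Set.mem_Ici.2 (by linarith))
      (Set.mem_Ici.2 (by linarith [(hD i).1]))).1 h1
    have h3 := pow_le_pow_left₀ h0 (by linarith : _ ≤ D i) 2
    rwa [mul_pow, Real.sq_sqrt (quad_nonneg (hpd xstar).posSemidef _)] at h3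
  have hstep : ∀ i < t, (B i).PosDef → (B (i + 1)).PosDef ∧ C (i + 1) ≤ C i ∧ ∃ a : ℝ, 0 < a ∧
      C (i + 1) ≤ (1 - α * (1 - β) * (2 / (1 + D i)) * a) * C i ∧
      ∀ c : ℝ, 0 < c → Psi d (c⁻¹ • (S⁻¹ * B (i + 1) * S⁻¹)) ≤
        Psi d (c⁻¹ • (S⁻¹ * B i * S⁻¹)) + ((1 + D i) / c - 1 + Real.log (c * a)) := by
    intro i hi hB
    obtain ⟨s, hs⟩ : ∃ s, s = η i • (-((B i)⁻¹ *ᵥ grad (x i))) := ⟨_, rfl⟩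
    have hx1 : x (i + 1) = x i + s := by rw [hxupd, hs]
    have hA : f (x i + s) ≤ f (x i) + α * (grad (x i) ⬝ᵥ s) := by
      have := hAW1 i
      rw [hx1] at this
      rw [hs] at this ⊢
      rw [dotProduct_smul, smul_eq_mul, ← mul_assoc]
      exact this
    have hW : β * (grad (x i) ⬝ᵥ s) ≤ grad (x i + s) ⬝ᵥ s := by
      have := mul_le_mul_of_nonneg_left (hAW2 i) (hη i).le
      rw [hx1] at this
      have e : ∀ v : Fin d → ℝ, v ⬝ᵥ s = η i * (v ⬝ᵥ (-((B i)⁻¹ *ᵥ grad (x i)))) := fun v => by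
        conv_lhs => rw [hs, dotProduct_smul, smul_eq_mul]
      rw [e, e]
      linarith
    have hdec : C (i + 1) ≤ C i := by
      have h0 : grad (x i) ⬝ᵥ s ≤ 0 := by
        have := quad_nonneg hB.inv.posSemidef (grad (x i))
        have h2 := mul_nonneg (hη i).le this
        rw [hs, dotProduct_smul, dotProduct_neg, smul_eq_mul]
        linarith
      rw [hC, hC, hx1]
      nlinarith
    have hgap : f xstar < f (x i) := by
      have := hCpos i hi.le
      rw [hC] at this
      linarith
    have hd1 := hdist (i + 1)
    have hd2 : D (i + 1) ^ 2 ≤ D i ^ 2 := pow_le_pow_left₀ (hD _).1 (hDmono _ _ hdec) 2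
    rw [hx1] at hd1
    obtain ⟨h1, a, ha, h2, h3⟩ := bfgs_step hf hgrad hhess hpd hM hssc hSpd hSsq hB (hD i).1 hα0 hβ
      (hη i) hs hA hW (hdist i) (hd1.trans hd2) hgap
    have hBe : B (i + 1) = bfgsUpdate (B i) s (grad (x i + s) - grad (x i)) := by
      rw [hBupd, hx1, add_sub_cancel_left]
    rw [← hBe] at h1 h3
    refine ⟨h1, hdec, a, ha, ?_, h3⟩
    rw [hC, hC, hx1]
    exact h2
  have hBpd : ∀ i ≤ t, (B i).PosDef := by
    intro i
    induction i with
    | zero => exact fun _ => hB0pd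
    | succ i ih => exact fun hi => (hstep i hi (ih (by omega))).1
  have hCle : ∀ i ≤ t, C i ≤ C 0 := by
    intro i
    induction i with
    | zero => exact fun _ => le_rfl
    | succ i ih => exact fun hi => ((hstep i hi (hBpd i (by omega))).2.1).trans (ih (by omega))
  have hDle : ∀ i ≤ t, D i ≤ D 0 := fun i hi => hDmono _ _ (hCle i hi)
  have hex : ∀ i, ∃ a : ℝ, i < t → 0 < a ∧
      C (i + 1) ≤ (1 - α * (1 - β) * (2 / (1 + D i)) * a) * C i ∧
      ∀ c : ℝ, 0 < c → Psi d (c⁻¹ • (S⁻¹ * B (i + 1) * S⁻¹)) ≤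
        Psi d (c⁻¹ • (S⁻¹ * B i * S⁻¹)) + ((1 + D i) / c - 1 + Real.log (c * a)) := by
    intro i
    by_cases hi : i < t
    · obtain ⟨a, ha⟩ := (hstep i hi (hBpd i hi.le)).2.2
      exact ⟨a, fun _ => ha⟩
    · exact ⟨0, fun h => absurd h hi⟩
  choose a ha using hex
  have htel : ∀ c : ℝ, 0 < c → ∀ n ≤ t, 0 ≤ Psi d (c⁻¹ • (S⁻¹ * B 0 * S⁻¹)) +
      ∑ i ∈ Finset.range n, ((1 + D i) / c - 1 + Real.log (c * a i)) := by
    intro c hc n hn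
    have h : ∀ m ≤ n, Psi d (c⁻¹ • (S⁻¹ * B m * S⁻¹)) ≤ Psi d (c⁻¹ • (S⁻¹ * B 0 * S⁻¹)) +
        ∑ i ∈ Finset.range m, ((1 + D i) / c - 1 + Real.log (c * a i)) := by
      intro m
      induction m with
      | zero => intro _; simp
      | succ m ih =>
        intro hm
        rw [Finset.sum_range_succ]
        linarith [ih (by omega), (ha m (by omega)).2.2 c hc]
    exact (Psi_nonneg (posDef_conj (hBpd n hn) hSpd hc)).trans (h n le_rfl)
  have hD0 : 0 < D 0 := by
    rcases (hD 0).1.eq_or_lt with h | h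
    · have h2 := (hD 0).2
      rw [← h] at h2
      have h3 : 0 < M ^ 2 * C 0 / 4 := by positivity
      rw [← h2] at h3
      simp [omegaFn] at h3
    · exact h
  set c := 1 + D 0 with hc
  have hc1 : 1 < c := by linarith
  have hc0 : 0 < c := by linarith
  set κ₁ := κ / c ^ 2 with hκ₁
  have hκ₁0 : 0 < κ₁ := by positivity
  have hκ₁1 : κ₁ < 1 := (div_lt_one (by positivity)).2 (by nlinarith)
  have hPbar : 0 ≤ Psi d Bbar := by rw [hBbar]; exact Psi_nonneg (posDef_conj hB0pd hSpd hc0)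
  -- In the metric `c • hess xstar` the secant terms of the potential are at most `1`,
  -- which gives a crude linear rate once `n ≥ Ψ(B̄₀)`.
  have hcrude : ∀ n ≤ t, Psi d Bbar ≤ n → C n ≤ (1 - κ₁ / 3) ^ n * C 0 := by
    intro n hn hPn
    refine geometric_rate (b := fun i => c * a i) hκ₁0 hκ₁1 (fun i hi => hCpos i (hi.trans hn))
      (fun i hi => mul_pos hc0 (ha i (by omega)).1) (fun i hi => ?_) ?_
    · refine (ha i (by omega)).2.1.trans (mul_le_mul_of_nonneg_right ?_ (hCnn i))
      have hai := (ha i (by omega)).1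
      have hDi := hDle i (by omega)
      have hDi0 := (hD i).1
      have e : κ₁ * (c * a i) = α * (1 - β) * (2 / c) * a i := by
        rw [hκ₁, hκ]; field_simp
      have : α * (1 - β) * (2 / c) * a i ≤ α * (1 - β) * (2 / (1 + D i)) * a i := by
        rw [hc]; gcongr
      linarith
    · have h := htel c hc0 n hn
      rw [← hBbar] at h
      have h2 : ∑ i ∈ Finset.range n, ((1 + D i) / c - 1 + Real.log (c * a i)) ≤
          ∑ i ∈ Finset.range n, Real.log (c * a i) := by
        refine Finset.sum_le_sum fun i hi => ?_
        have : (1 + D i) / c ≤ 1 :=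
          (div_le_one hc0).2 (by linarith [hDle i (by have := Finset.mem_range.1 hi; omega)])
        linarith
      linarith
  -- `D` decays like the square root of `C`, hence geometrically with ratio `1 - κ₁ / 6`.
  have hDdecay : ∀ n ≤ t, Psi d Bbar ≤ n → D n ≤ D 0 * (1 - κ₁ / 6) ^ n := by
    intro n hn hPn
    have hl := sq_mul_omegaFn_le (l := D n / D 0) (x := D 0 / 2) (div_nonneg (hD n).1 hD0.le)
      ((div_le_one hD0).2 (hDle n hn)) (by linarith)
    have e : D n / D 0 * (D 0 / 2) = D n / 2 := by field_simp
    rw [e, (hD 0).2, (hD n).2] at hl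
    have h1 : (D n / D 0) ^ 2 * C 0 ≤ C n := by
      have hM2 : 0 < M ^ 2 / 4 := by positivity
      refine le_of_mul_le_mul_left ?_ hM2
      linarith
    have h2 : (D n / D 0) ^ 2 ≤ (1 - κ₁ / 3) ^ n :=
      le_of_mul_le_mul_right (h1.trans (hcrude n hn hPn)) hC0
    have h3 : (1 - κ₁ / 3) ^ n ≤ ((1 - κ₁ / 6) ^ n) ^ 2 := by
      rw [← pow_mul, mul_comm n 2, pow_mul]
      exact pow_le_pow_left₀ (by linarith) (by nlinarith [sq_nonneg κ₁]) n
    have h4 : D n / D 0 ≤ (1 - κ₁ / 6) ^ n :=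
      le_of_sq_le_sq (h2.trans h3) (pow_nonneg (by linarith) n)
    rwa [div_le_iff₀ hD0, mul_comm] at h4
  have hsumD : ∑ i ∈ Finset.range t, D i ≤ D 0 * (Psi d Bbar + 1 + 6 / κ₁) := by
    set ρ := 1 - κ₁ / 6 with hρ
    have hρ0 : 0 < ρ := by linarith
    set N := ⌈Psi d Bbar⌉₊ with hN
    have hNle : (N : ℝ) ≤ Psi d Bbar + 1 := (Nat.ceil_lt_add_one hPbar).le
    have hpt : ∀ i ∈ Finset.range t, D i ≤ D 0 * ((if i < N then 1 else 0) + ρ ^ i) := by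
      intro i hi
      have hit := (Finset.mem_range.1 hi).le
      split_ifs with h
      · have : 0 ≤ ρ ^ i := by positivity
        nlinarith [hDle i hit]
      · rw [zero_add]
        exact hDdecay i hit (Nat.ceil_le.1 (not_lt.1 h))
    refine (Finset.sum_le_sum hpt).trans ?_
    rw [← Finset.mul_sum, Finset.sum_add_distrib]
    refine mul_le_mul_of_nonneg_left (add_le_add ?_ ?_) hD0.le
    · rw [Finset.sum_boole]
      refine le_trans ?_ hNle
      have hsub : (Finset.range t).filter (fun i => i < N) ⊆ Finset.range N := fun i hi =>
        Finset.mem_range.2 (Finset.mem_filter.1 hi).2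
      exact_mod_cast (Finset.card_le_card hsub).trans (by simp)
    · have hg : (∑ i ∈ Finset.range t, ρ ^ i) * (1 - ρ) = 1 - ρ ^ t := geom_sum_mul_neg ρ t
      have h1 : 1 - ρ = κ₁ / 6 := by rw [hρ]; ring
      rw [h1] at hg
      rw [le_div_iff₀ hκ₁0]
      have : 0 < ρ ^ t := by positivity
      linarith
  have hsum2 : Psi d Btil + 2 * ∑ i ∈ Finset.range t, D i ≤ t := by
    refine le_trans ?_ ht
    have e : 6 / κ₁ = 3 * c ^ 2 / (α * (1 - β)) := by
      rw [hκ₁, hκ]; field_simp; norm_num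
    rw [← e]
    -- `6 / κ₁ ≥ 6` absorbs the additive `1` that comes from rounding `Ψ(B̄₀)` up to an integer.
    have h6 : 6 ≤ 6 / κ₁ := by rw [le_div_iff₀ hκ₁0]; linarith
    nlinarith
  -- In the metric of `hess xstar` itself the potential loses at most `D i` per step and the gradient
  -- domination constant at most `log (1 + D i) ≤ D i`; both losses are summable by `hsumD`.
  refine geometric_rate (b := fun i => a i / (1 + D i)) hκ0 hκ1 hCpos
    (fun i hi => div_pos (ha i hi).1 (by linarith [(hD i).1])) (fun i hi => ?_) ?_
  · have e : κ * (a i / (1 + D i)) = α * (1 - β) * (2 / (1 + D i)) * a i := by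
      rw [hκ]; ring
    rw [e]
    exact (ha i hi).2.1
  · have h := htel 1 one_pos t le_rfl
    rw [inv_one, one_smul, ← hBtil] at h
    have h2 : ∑ i ∈ Finset.range t, ((1 + D i) / 1 - 1 + Real.log (1 * a i)) ≤
        ∑ i ∈ Finset.range t, (Real.log (a i / (1 + D i)) + 2 * D i) := by
      refine Finset.sum_le_sum fun i hi => ?_
      have hDi := (hD i).1
      have h1D : 0 < 1 + D i := by linarith
      rw [Real.log_div (ha i (Finset.mem_range.1 hi)).1.ne' h1D.ne', one_mul, div_one]
      linarith [Real.log_le_sub_one_of_pos h1D]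
    rw [Finset.sum_add_distrib (f := fun i => Real.log (a i / (1 + D i))),
      ← Finset.mul_sum] at h2
    linarith
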